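/- If $A\ge 1$ and $0\le x<1/A$, then $A\bigl(x+\ln(1-x)\bigr)\le \ln\bigl(1-Ax^2/2\bigr)$. -/

import Mathlib

open MeasureTheory ProbabilityTheory

/-!
Put `t = A x / 2`, so that `t ≤ 1` and `1 - A x² / 2 = 1 - t x`. Bernoulli's inequality for the
exponent `t` gives `t log (1 - x) ≤ log (1 - t x)`, and `A (x + log (1 - x)) ≤ t log (1 - x)` is
the Padé bound `log (1 - x) ≤ -2x / (2 - x)` multiplied by `A (2 - x) / 2`.
-/

theorem mul_log_one_add_le_log_one_add_mul {s t : ℝ} (hs : -1 < s) (ht0 : 0 ≤ t) (ht1 : t ≤ 1) :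
    t * Real.log (1 + s) ≤ Real.log (1 + t * s) := by
  have hs' : 0 < 1 + s := by linarith
  rw [← Real.log_rpow hs']
  exact Real.log_le_log (Real.rpow_pos_of_pos hs' t)
    (rpow_one_add_le_one_add_mul_self hs.le ht0 ht1)

theorem log_one_sub_le_neg_two_mul_div {x : ℝ} (hx0 : 0 ≤ x) (hx1 : x < 1) :
    Real.log (1 - x) ≤ -(2 * x / (2 - x)) := by
  have hpos : 0 < 1 - x := sub_pos.2 hx1
  have hpos' : 0 < 2 - x := by linarith
  have hinv : 1 + x / (1 - x) = (1 - x)⁻¹ := by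
    field_simp
    ring
  have hden : x / (1 - x) + 2 = (2 - x) / (1 - x) := by
    field_simp
    ring
  have hfrac : 2 * (x / (1 - x)) / (x / (1 - x) + 2) = 2 * x / (2 - x) := by
    rw [hden]
    field_simp
  have hlog := Real.le_log_one_add_of_nonneg (div_nonneg hx0 hpos.le)
  rw [hfrac, hinv, Real.log_inv] at hlog
  exact le_neg_of_le_neg hlog

theorem add_log_one_sub_le_half_mul_log_one_sub {x : ℝ} (hx0 : 0 ≤ x) (hx1 : x < 1) :
    x + Real.log (1 - x) ≤ x / 2 * Real.log (1 - x) := by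
  have hlog := log_one_sub_le_neg_two_mul_div hx0 hx1
  rw [← neg_div, le_div_iff₀ (by linarith)] at hlog
  linarith

theorem log_ineq_lemmaA_general {A x : ℝ} (hA : 0 ≤ A) (hx0 : 0 ≤ x) (hx1 : x < 1)
    (hAx : A * x ≤ 2) :
    A * (x + Real.log (1 - x)) ≤ Real.log (1 - A * x ^ 2 / 2) :=
  calc
    A * (x + Real.log (1 - x)) ≤ A * (x / 2 * Real.log (1 - x)) :=
      mul_le_mul_of_nonneg_left (add_log_one_sub_le_half_mul_log_one_sub hx0 hx1) hA
    _ = A * x / 2 * Real.log (1 + -x) := by ring_nf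
    _ ≤ Real.log (1 + A * x / 2 * -x) :=
      mul_log_one_add_le_log_one_add_mul (neg_lt_neg hx1) (by positivity) (by linarith)
    _ = Real.log (1 - A * x ^ 2 / 2) := by ring_nf

/-- Lemma A: if `A ≥ 1` and `0 ≤ x < 1/A`, then `A(x + ln(1-x)) ≤ ln(1 - A x²/2)`. -/
theorem log_ineq_lemmaA (A x : ℝ) (hA : 1 ≤ A) (hx0 : 0 ≤ x) (hx1 : x < 1 / A) :
    A * (x + Real.log (1 - x)) ≤ Real.log (1 - A * x ^ 2 / 2) := by
  have hAx : A * x < 1 := (lt_div_iff₀' (by linarith)).1 hx1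
  have hx1' : x < 1 := (le_mul_of_one_le_left hx0 hA).trans_lt hAx
  exact log_ineq_lemmaA_general (by linarith) hx0 hx1' (by linarith)
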